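/- Let k be an algebraically closed field of characteristic p > 0, let e be a positive integer and q = p^e, let n = q + 1, let a be a nonzero element of k, and let s be a positive integer. Then the Galois group of the polynomial Y^n - a·X^{-s}·Y + 1 over the rational function field k(X) is isomorphic, as a group, to PSL(2,q), i.e., to the quotient of SL(2, F_q) by its center. -/

import Mathlib

open Polynomial

/-!
Substituting `Y = Z ^ (q - 1)` and multiplying by `Z`, the trinomial `Y ^ (q + 1) - b * Y + 1`
becomes the linearized polynomial `Z ^ q² - b * Z ^ q + Z`, whose roots form a plane over `F_q`.
The Moore determinant `v * w ^ q - v ^ q * w` of two roots lies in `F_q`, so it is fixed by the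
Galois group `G` of the linearized polynomial, which therefore acts on the plane through
`SL(2, F_q)`. The roots of the trinomial correspond to the lines of the plane, so its own Galois
group is the image of `G` in `PSL(2, q)`.

A subgroup of `SL(2, F_q)` which fixes no line and has order divisible by `q` is everything: a
subgroup of order `q` fixes a vector, so consists of all transvections along it, and together with
one element moving the line of that vector these generate the whole group. For
`b = a * X ^ (-s)`, a fixed line would be a root of the trinomial in `k(X)`, which comparing
numerators and denominators excludes. The factor `q` comes from ramification at `X = 0`: replacing
`k` by an algebraic closure and `b` by a `p`-power root, one may take `s` prime to `p`, and a root
with a pole there forces `q` to divide the ramification index.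
-/

section SpecialLinearGroup

open Matrix Matrix.SpecialLinearGroup
open scoped MatrixGroups

variable {F : Type*} [Field F] {H : Subgroup SL(2, F)}

lemma mem_of_apply_one_zero_eq (hT : ∀ t : F, transvection zero_ne_one t ∈ H) {A B : SL(2, F)}
    (hB : B ∈ H) (hB₀ : B 1 0 ≠ 0) (hAB : A 1 0 = B 1 0) : A ∈ H := by
  have hA_eq : A = transvection zero_ne_one ((A 0 0 - B 0 0) / B 1 0) * B *
      transvection zero_ne_one ((A 1 1 - B 1 1) / B 1 0) := by
    have hdetA := A.det_coe
    have hdetB := B.det_coe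
    rw [det_fin_two] at hdetA hdetB
    ext i j
    fin_cases i <;> fin_cases j <;>
      simp [transvection_coe, mul_add, add_mul, mul_apply, Fin.sum_univ_two, single_apply, hAB]
    · grind
    · grind
    · grind
  rw [hA_eq]
  exact mul_mem (mul_mem (hT _) hB) (hT _)

lemma mem_of_apply_one_zero_ne_zero (hT : ∀ t : F, transvection zero_ne_one t ∈ H)
    {A B : SL(2, F)} (hB : B ∈ H) (hB₀ : B 1 0 ≠ 0) (hA₀ : A 1 0 ≠ 0) : A ∈ H := by
  let M (y : F) : SL(2, F) :=
    ⟨!![0, -(B 1 0)⁻¹; B 1 0, y], by rw [det_fin_two_of]; field_simp; ring⟩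
  have hM_coe (y : F) : (M y : Matrix (Fin 2) (Fin 2) F) = !![0, -(B 1 0)⁻¹; B 1 0, y] := rfl
  have hM (y : F) : M y ∈ H := mem_of_apply_one_zero_eq hT hB hB₀ rfl
  have hprod : (M (A 1 0 / B 1 0) * M 0) 1 0 = A 1 0 := by
    rw [Matrix.SpecialLinearGroup.coe_mul, hM_coe, hM_coe]
    simp [hB₀]
  exact mem_of_apply_one_zero_eq hT (mul_mem (hM _) (hM _)) (by rwa [hprod]) hprod.symm

theorem eq_top_of_forall_transvection_mem (hT : ∀ t : F, transvection zero_ne_one t ∈ H)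
    {B : SL(2, F)} (hB : B ∈ H) (hB₀ : B 1 0 ≠ 0) : H = ⊤ := by
  refine (Subgroup.eq_top_iff' H).2 fun A ↦
    SL2.transvection_induction (· ∈ H) (fun i j hij t ↦ ?_) (fun _ _ ↦ mul_mem) A
  obtain rfl | ht := eq_or_ne t 0
  · simp
  fin_cases i <;> fin_cases j
  · exact absurd rfl hij
  · exact hT t
  · exact mem_of_apply_one_zero_ne_zero hT hB hB₀ (by simpa [transvection_coe] using ht)
  · exact absurd rfl hij

lemma eq_transvection_of_smul_single {A : SL(2, F)}
    (hA : A • (Pi.single 0 1 : Fin 2 → F) = Pi.single 0 1) :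
    A = transvection zero_ne_one (A 0 1) := by
  have h00 : A 0 0 = 1 := by simpa [Matrix.SpecialLinearGroup.smul_def] using congrFun hA 0
  have h10 : A 1 0 = 0 := by simpa [Matrix.SpecialLinearGroup.smul_def] using congrFun hA 1
  have h11 : A 1 1 = 1 := by
    simpa only [det_fin_two, h00, h10, one_mul, mul_zero, sub_zero] using A.det_coe
  ext i j
  fin_cases i <;> fin_cases j <;> simp [transvection_coe, h00, h10, h11]

variable [Finite F]

lemma transvection_mem_of_card_eq {P : Subgroup SL(2, F)} (hP : Nat.card P = Nat.card F)
    (hfix : ∀ A ∈ P, A • (Pi.single 0 1 : Fin 2 → F) = Pi.single 0 1) (t : F) :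
    transvection zero_ne_one t ∈ P := by
  have hinj : Function.Injective fun A : P ↦ (A : SL(2, F)) 0 1 := fun A B hAB ↦ Subtype.ext <| by
    rw [eq_transvection_of_smul_single (hfix A A.2), eq_transvection_of_smul_single (hfix B B.2)]
    exact congrArg _ hAB
  obtain ⟨A, rfl⟩ := ((Nat.bijective_iff_injective_and_card _).2 ⟨hinj, hP⟩).surjective t
  exact eq_transvection_of_smul_single (hfix A A.2) ▸ A.2

lemma exists_ne_zero_forall_smul_eq {P : Subgroup SL(2, F)} (hP : Nat.card P = Nat.card F) :
    ∃ v : Fin 2 → F, v ≠ 0 ∧ ∀ A ∈ P, A • v = v := by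
  have := Fintype.ofFinite F
  obtain ⟨p, _, n, hp, hcard⟩ := FiniteField.card' F
  have := Fact.mk hp
  have hPg : IsPGroup p P := IsPGroup.of_card (by rw [hP, Nat.card_eq_fintype_card, hcard])
  have hdvd : p ∣ Nat.card (Fin 2 → F) := by
    rw [Nat.card_fun, Nat.card_eq_fintype_card (α := F), hcard, ← pow_mul]
    exact dvd_pow_self p (by simp)
  obtain ⟨v, hv, hv₀⟩ := hPg.exists_fixed_point_of_prime_dvd_card_of_fixed_point (Fin 2 → F) hdvd
    (a := 0) fun A ↦ smul_zero A
  exact ⟨v, hv₀.symm, fun A hA ↦ hv ⟨A, hA⟩⟩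

lemma exists_le_card_eq_card_field (hH : Nat.card F ∣ Nat.card H) :
    ∃ P ≤ H, Nat.card P = Nat.card F := by
  have := Fintype.ofFinite F
  obtain ⟨p, _, n, hp, hcard⟩ := FiniteField.card' F
  have := Fact.mk hp
  rw [Nat.card_eq_fintype_card (α := F), hcard] at hH ⊢
  obtain ⟨P, hP⟩ := Sylow.exists_subgroup_card_pow_prime p hH
  exact ⟨P.map H.subtype, H.map_subtype_le P, by rw [H.card_subtype P, hP]⟩

theorem eq_top_of_card_dvd_of_forall_smul_ne (hH : Nat.card F ∣ Nat.card H)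
    (hline : ∀ v : Fin 2 → F, v ≠ 0 → ∃ A ∈ H, ∀ c : F, A • v ≠ c • v) : H = ⊤ := by
  obtain ⟨P, hPH, hP⟩ := exists_le_card_eq_card_field hH
  obtain ⟨v, hv₀, hv⟩ := exists_ne_zero_forall_smul_eq hP
  obtain ⟨g, hg⟩ : ∃ g : SL(2, F), g • (Pi.single 0 1 : Fin 2 → F) = v := by
    have hcop : IsCoprime (v 0) (v 1) := by
      obtain h₀ | h₀ : v 0 ≠ 0 ∨ v 1 ≠ 0 := by simpa [Function.ne_iff] using hv₀
      · exact ⟨(v 0)⁻¹, 0, by simp [h₀]⟩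
      · exact ⟨0, (v 1)⁻¹, by simp [h₀]⟩
    obtain ⟨g, hg0, hg1⟩ := hcop.exists_SL2_col 0
    exact ⟨g, by ext i; fin_cases i <;> simp [Matrix.SpecialLinearGroup.smul_def, hg0, hg1]⟩
  let c := (MulAut.conj g⁻¹).toMonoidHom
  have hc : Function.Injective c := (MulAut.conj g⁻¹).injective
  have hc_smul (A : SL(2, F)) : c A • (Pi.single 0 1 : Fin 2 → F) = g⁻¹ • A • v := by
    simp [c, mul_smul, hg]
  have hT : ∀ t : F, transvection zero_ne_one t ∈ P.map c :=
    transvection_mem_of_card_eq (by rw [Subgroup.card_map_of_injective hc, hP]) <| by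
      rintro _ ⟨A, hA, rfl⟩
      rw [hc_smul, hv A hA, ← hg, inv_smul_smul]
  obtain ⟨A, hA, hAv⟩ := hline v hv₀
  have hA₀ : c A 1 0 ≠ 0 := fun h₀ ↦ hAv (c A 0 0) <| by
    have hcA : c A • (Pi.single 0 1 : Fin 2 → F) = c A 0 0 • Pi.single 0 1 := by
      ext i; fin_cases i <;> simp [Matrix.SpecialLinearGroup.smul_def, h₀]
    rw [← smul_inv_smul g (A • v), ← hc_smul, hcA, smul_comm, hg]
  apply Subgroup.map_injective hc
  rw [eq_top_of_forall_transvection_mem (fun t ↦ Subgroup.map_mono hPH (hT t))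
    (Subgroup.mem_map_of_mem c hA) hA₀,
    Subgroup.map_top_of_surjective c (MulAut.conj g⁻¹).surjective]

end SpecialLinearGroup

section RootSpace

variable {F E : Type*} [Field F] [Fintype F] [Field E] [Algebra F E]

local notation "q" => Fintype.card F

lemma exists_algebraMap_eq_of_pow_card_eq {x : E} (hx : x ^ q = x) :
    ∃ c : F, algebraMap F E c = x := by
  have hprod : (X ^ q - X : F[X]) = ∏ c : F, (X - C c) := by
    have hroots := FiniteField.roots_X_pow_card_sub_X F
    have hmonic : (X ^ q - X : F[X]).Monic :=
      monic_X_pow_sub (by simpa using Fintype.one_lt_card)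
    rw [← prod_multiset_X_sub_C_of_monic_of_roots_card_eq hmonic, hroots]
    · rfl
    · rw [hroots, FiniteField.X_pow_card_sub_X_natDegree_eq F Fintype.one_lt_card]
      rfl
  have hzero := congrArg (aeval x) hprod
  simp only [map_prod, map_sub, aeval_X, aeval_C, map_pow, hx, sub_self] at hzero
  obtain ⟨c, -, hc⟩ := Finset.prod_eq_zero_iff.1 hzero.symm
  exact ⟨c, (sub_eq_zero.1 hc).symm⟩

lemma pow_card_sub_one_eq_iff {v w : E} (hv : v ≠ 0) (hw : w ≠ 0) :
    w ^ (q - 1) = v ^ (q - 1) ↔ ∃ c : F, w = c • v := by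
  constructor
  · intro h
    obtain ⟨c, hc⟩ := exists_algebraMap_eq_of_pow_card_eq (F := F) (x := w / v) <| by
      rw [div_pow, ← pow_sub_one_mul Fintype.card_ne_zero, h,
        ← pow_sub_one_mul Fintype.card_ne_zero v,
        mul_div_mul_left _ _ (pow_ne_zero _ hv)]
    exact ⟨c, by rw [Algebra.smul_def, hc, div_mul_cancel₀ _ hv]⟩
  · rintro ⟨c, rfl⟩
    rw [_root_.smul_pow, FiniteField.pow_card_sub_one_eq_one c (left_ne_zero_of_smul hw), one_smul]

variable (F E) in
/-- The Moore determinant `v * w ^ q - v ^ q * w` of two elements, as an alternating `F`-bilinear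
form on `E`, where `q` is the cardinality of `F`. -/
noncomputable def mooreForm : E →ₗ[F] E →ₗ[F] E :=
  (LinearMap.mul F E).compl₂ (FiniteField.frobeniusAlgHom F E).toLinearMap -
    (LinearMap.mul F E).comp (FiniteField.frobeniusAlgHom F E).toLinearMap

lemma mooreForm_apply (v w : E) : mooreForm F E v w = v * w ^ q - v ^ q * w := rfl

lemma mooreForm_ne_zero {v w : E} (h : LinearIndependent F ![v, w]) : mooreForm F E v w ≠ 0 := by
  intro h₀
  rw [mooreForm_apply] at h₀
  have hv : v ≠ 0 := h.ne_zero 0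
  obtain ⟨c, hc⟩ := exists_algebraMap_eq_of_pow_card_eq (F := F) (x := w / v) <| by
    rw [div_pow, div_eq_div_iff (pow_ne_zero _ hv) hv]
    linear_combination h₀
  refine (LinearIndependent.pair_iff' hv).1 h c ?_
  rw [Algebra.smul_def, hc, div_mul_cancel₀ _ hv]

lemma mooreForm_smul_add_smul (α β γ δ : F) (v w : E) :
    mooreForm F E (α • v + γ • w) (β • v + δ • w) = (α * δ - β * γ) • mooreForm F E v w := by
  have hself (x : E) : mooreForm F E x x = 0 := by rw [mooreForm_apply]; ring
  have hswap : mooreForm F E w v = -mooreForm F E v w := by simp only [mooreForm_apply]; ring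
  simp only [map_add, map_smul, LinearMap.add_apply, LinearMap.smul_apply, hself, hswap]
  module

variable (F) in
/-- The `F`-vector space of roots in `E` of the linearized polynomial `X ^ q² - b * X ^ q + X`,
where `q` is the cardinality of `F`. -/
noncomputable def rootSpace (b : E) : Submodule F E :=
  let φ := (FiniteField.frobeniusAlgHom F E).toLinearMap
  LinearMap.ker (φ ∘ₗ φ - b • φ + LinearMap.id)

variable {b v w : E}

lemma mem_rootSpace : v ∈ rootSpace F b ↔ v ^ q ^ 2 - b * v ^ q + v = 0 := by
  rw [rootSpace, LinearMap.mem_ker, sq, pow_mul]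
  rfl

lemma mooreForm_pow_card (hv : v ∈ rootSpace F b) (hw : w ∈ rootSpace F b) :
    mooreForm F E v w ^ q = mooreForm F E v w := by
  have hφ := map_sub (FiniteField.frobeniusAlgHom F E) (v * w ^ q) (v ^ q * w)
  simp only [FiniteField.frobeniusAlgHom_apply, mul_pow, ← pow_mul, ← sq] at hφ
  rw [mem_rootSpace] at hv hw
  rw [mooreForm_apply, hφ]
  linear_combination v ^ q * hw - w ^ q * hv

end RootSpace

section Trinomial

variable {K L : Type*} [Field K] [Field L]

/-- Abhyankar's trinomial `X ^ (q + 1) - b * X + 1`, with the coefficient `b` left arbitrary. -/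
noncomputable def abhyankarTrinomial (q : ℕ) (b : K) : K[X] := X ^ (q + 1) - C b * X + 1

variable {q : ℕ} (b : K)

lemma abhyankarTrinomial_map (φ : K →+* L) :
    (abhyankarTrinomial q b).map φ = abhyankarTrinomial q (φ b) := by
  simp [abhyankarTrinomial]

variable (hq : 0 < q)
include hq

lemma natDegree_abhyankarTrinomial : (abhyankarTrinomial q b).natDegree = q + 1 := by
  rw [abhyankarTrinomial]
  compute_degree!
  simp [hq.ne']

lemma monic_abhyankarTrinomial : (abhyankarTrinomial q b).Monic := by
  rw [abhyankarTrinomial]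
  monicity!
  simp [hq.ne']

end Trinomial

section RootPolynomial

variable (F : Type*) {K : Type*} [Fintype F] [Field K] (b : K)

local notation "q" => Fintype.card F

/-- The polynomial `X ^ (q² - 1) - b * X ^ (q - 1) + 1`, whose roots are the nonzero elements of
`rootSpace F b`. It is kept as a composition, as `Polynomial.Gal.restrictComp` then relates its
Galois group to that of `abhyankarTrinomial q b`. -/
noncomputable abbrev rootPolynomial : K[X] := (abhyankarTrinomial q b).comp (X ^ (q - 1))

lemma rootPolynomial_map {L : Type*} [Field L] (φ : K →+* L) :
    (rootPolynomial F b).map φ = rootPolynomial F (φ b) := by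
  rw [map_comp, abhyankarTrinomial_map, Polynomial.map_pow, map_X]

variable [Field F]

variable (K) in
lemma natDegree_X_pow_card_sub_one_ne_zero : (X ^ (q - 1) : K[X]).natDegree ≠ 0 := by
  rw [natDegree_X_pow, Nat.sub_ne_zero_iff_lt]
  exact Fintype.one_lt_card

lemma X_mul_rootPolynomial : X * rootPolynomial F b = X ^ q ^ 2 - C b * X ^ q + X := by
  obtain ⟨r, hr⟩ : ∃ r, q = r + 1 := Nat.exists_eq_succ_of_ne_zero Fintype.card_ne_zero
  simp only [rootPolynomial, abhyankarTrinomial, add_comp, sub_comp, mul_comp, pow_comp, X_comp,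
    C_comp, one_comp, hr, Nat.add_sub_cancel]
  ring

lemma monic_rootPolynomial : (rootPolynomial F b).Monic :=
  (monic_abhyankarTrinomial b Fintype.card_pos).comp (monic_X_pow _)
    (natDegree_X_pow_card_sub_one_ne_zero F K)

lemma natDegree_rootPolynomial : (rootPolynomial F b).natDegree = q ^ 2 - 1 := by
  rw [natDegree_comp, natDegree_abhyankarTrinomial b Fintype.card_pos, natDegree_X_pow,
    ← Nat.sq_sub_sq, one_pow]

lemma natDegree_rootPolynomial_ne_zero : (rootPolynomial F b).natDegree ≠ 0 := by
  rw [natDegree_comp, natDegree_abhyankarTrinomial b Fintype.card_pos]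
  exact mul_ne_zero (Nat.succ_ne_zero _) (natDegree_X_pow_card_sub_one_ne_zero F K)

lemma coeff_zero_rootPolynomial : (rootPolynomial F b).coeff 0 = 1 := by
  have hq := Fintype.one_lt_card (α := F)
  rw [coeff_zero_eq_eval_zero, eval_comp, eval_X_pow, zero_pow (by lia)]
  simp [abhyankarTrinomial]

lemma separable_rootPolynomial [Algebra F K] : (rootPolynomial F b).Separable := by
  have hq : (q : K) = 0 := by
    rw [← map_natCast (algebraMap F K), FiniteField.cast_card_eq_zero, map_zero]
  have hder := congrArg derivative (X_mul_rootPolynomial F b)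
  simp only [derivative_mul, derivative_X, derivative_add, derivative_sub, derivative_X_pow,
    derivative_C, Nat.cast_pow, hq, zero_pow two_ne_zero, map_zero] at hder
  exact ⟨1, X, by linear_combination hder⟩

variable {F b} {E : Type*} [Field E] [Algebra K E]

lemma ne_zero_of_mem_rootSet_rootPolynomial {v : E} (hv : v ∈ (rootPolynomial F b).rootSet E) :
    v ≠ 0 := by
  rintro rfl
  have h := aeval_eq_zero_of_mem_rootSet hv
  rw [← coeff_zero_eq_aeval_zero', coeff_zero_rootPolynomial, map_one] at h
  exact one_ne_zero h

variable (F b) in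
lemma pow_card_sq_sub_add_eq_zero_iff {v : E} :
    v ^ q ^ 2 - algebraMap K E b * v ^ q + v = 0 ↔ v = 0 ∨ v ∈ (rootPolynomial F b).rootSet E := by
  rw [mem_rootSet_of_ne (monic_rootPolynomial F b).ne_zero, ← mul_eq_zero]
  have h := congrArg (aeval v) (X_mul_rootPolynomial F b)
  simp only [map_mul, map_add, map_sub, map_pow, aeval_X, aeval_C] at h
  rw [h]

variable [Algebra F E]

lemma mem_rootSpace_iff_eq_zero_or_mem_rootSet {v : E} :
    v ∈ rootSpace F (algebraMap K E b) ↔ v = 0 ∨ v ∈ (rootPolynomial F b).rootSet E :=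
  mem_rootSpace.trans (pow_card_sq_sub_add_eq_zero_iff F b)

lemma rootSpace_eq_insert : (rootSpace F (algebraMap K E b) : Set E) =
    insert 0 ((rootPolynomial F b).rootSet E) :=
  Set.ext fun _ ↦ mem_rootSpace_iff_eq_zero_or_mem_rootSet

instance finite_rootSpace : Finite (rootSpace F (algebraMap K E b)) := by
  have h : (rootSpace F (algebraMap K E b) : Set E).Finite := by
    rw [rootSpace_eq_insert]
    exact (rootSet_finite _ _).insert 0
  exact h

lemma finrank_rootSpace [Algebra F K]
    (hsplits : ((rootPolynomial F b).map (algebraMap K E)).Splits) :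
    Module.finrank F (rootSpace F (algebraMap K E b)) = 2 := by
  have hq := Fintype.one_lt_card (α := F)
  have hcard : Nat.card (rootSpace F (algebraMap K E b)) = q ^ 2 := by
    rw [← SetLike.coe_sort_coe, rootSpace_eq_insert, Nat.card_coe_set_eq,
      Set.ncard_insert_of_notMem (fun h ↦ ne_zero_of_mem_rootSet_rootPolynomial h rfl)
        (rootSet_finite _ _),
      ← Nat.card_coe_set_eq, Nat.card_eq_fintype_card,
      card_rootSet_eq_natDegree (separable_rootPolynomial F b) hsplits, natDegree_rootPolynomial,
      Nat.sub_add_cancel (Nat.one_le_pow _ _ (by lia))]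
  rw [Module.natCard_eq_pow_finrank (K := F), Nat.card_eq_fintype_card] at hcard
  exact Nat.pow_right_injective hq hcard

end RootPolynomial

section SplittingField

variable {K : Type*} [Field K] {f : K[X]} {E : Type*} [Field E] [Algebra K E]

variable (f) in
lemma eq_one_of_forall_mem_rootSet [f.IsSplittingField K E] {σ : E ≃ₐ[K] E}
    (hσ : ∀ x ∈ f.rootSet E, σ x = x) : σ = 1 := by
  have hHom : (σ : E →ₐ[K] E) = AlgHom.id K E :=
    AlgHom.ext_of_adjoin_eq_top (IsSplittingField.adjoin_rootSet E f) hσ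
  exact AlgEquiv.ext fun x ↦ DFunLike.congr_fun hHom x

lemma restrict_eq_one_iff [Fact (f.map (algebraMap K E)).Splits] {σ : E ≃ₐ[K] E} :
    Gal.restrict f E σ = 1 ↔ ∀ x ∈ f.rootSet E, σ x = x := by
  rw [← map_eq_one_iff _ (Gal.galActionHom_injective f E), Equiv.ext_iff]
  simp [Subtype.ext_iff, Gal.galActionHom_restrict]

lemma exists_mem_rootSet_comp_aeval_eq {h : K[X]} (hfh : f.comp h ≠ 0) (hh : h.natDegree ≠ 0)
    (hsplits : ((f.comp h).map (algebraMap K E)).Splits) {y : E} (hy : y ∈ f.rootSet E) :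
    ∃ v ∈ (f.comp h).rootSet E, aeval v h = y := by
  have hdvd : h.map (algebraMap K E) - C y ∣ (f.comp h).map (algebraMap K E) := by
    have h' := sub_dvd_eval_sub (h.map (algebraMap K E)) (C y) ((f.map (algebraMap K E)).map C)
    rwa [eval_map, eval_map, eval₂_at_apply, ← comp, eval_map_algebraMap,
      aeval_eq_zero_of_mem_rootSet hy, map_zero, sub_zero, ← map_comp] at h'
  obtain ⟨v, hv⟩ := (hsplits.of_dvd (map_ne_zero hfh) hdvd).exists_eval_eq_zero fun h₀ ↦ hh <| by
    rw [← natDegree_map (algebraMap K E), ← natDegree_sub_C (a := y)]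
    exact natDegree_eq_of_degree_eq_some h₀
  rw [eval_sub, eval_C, eval_map_algebraMap, sub_eq_zero] at hv
  exact ⟨v, by rw [mem_rootSet_of_ne hfh, aeval_comp, hv, aeval_eq_zero_of_mem_rootSet hy], hv⟩

lemma restrictComp_eq_one_iff {h : K[X]} (hh : h.natDegree ≠ 0) (hfh : f.comp h ≠ 0)
    {σ : (f.comp h).Gal} :
    Gal.restrictComp f h hh σ = 1 ↔
      ∀ v ∈ (f.comp h).rootSet (f.comp h).SplittingField, σ (aeval v h) = aeval v h := by
  have : Fact (f.map (algebraMap K (f.comp h).SplittingField)).Splits :=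
    ⟨Gal.splits_in_splittingField_of_comp f h hh⟩
  have hf : f ≠ 0 := fun hf ↦ hfh (by rw [hf, zero_comp])
  refine (restrict_eq_one_iff (f := f)).trans ⟨fun H v hv ↦ H _ ?_, fun H y hy ↦ ?_⟩
  · rw [mem_rootSet_of_ne hf, ← aeval_comp, aeval_eq_zero_of_mem_rootSet hv]
  · obtain ⟨v, hv, rfl⟩ :=
      exists_mem_rootSet_comp_aeval_eq hfh hh (SplittingField.splits (f.comp h)) hy
    exact H v hv

theorem natCard_algEquiv_dvd_natCard_gal {K' : Type*} [Field K'] [Algebra K K'] [Algebra K' E]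
    [IsScalarTower K K' E] [(f.map (algebraMap K K')).IsSplittingField K' E] (hf : f ≠ 0) :
    Nat.card (E ≃ₐ[K'] E) ∣ Nat.card f.Gal := by
  have hsplits : Fact (f.map (algebraMap K E)).Splits := ⟨by
    rw [IsScalarTower.algebraMap_eq K K' E, ← Polynomial.map_map]
    exact IsSplittingField.splits E (f.map (algebraMap K K'))⟩
  refine Subgroup.card_dvd_of_injective ((Gal.restrict f E).comp (AlgEquiv.restrictScalarsHom K))
    ((injective_iff_map_eq_one _).2 fun σ hσ ↦ ?_)
  rw [MonoidHom.comp_apply, restrict_eq_one_iff] at hσ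
  refine eq_one_of_forall_mem_rootSet (f.map (algebraMap K K')) fun x hx ↦ hσ x ?_
  rwa [mem_rootSet_of_ne hf, ← aeval_map_algebraMap K', ← mem_rootSet_of_ne (map_ne_zero hf)]

theorem natCard_algEquiv_dvd_natCard_gal_map_iterateFrobenius [f.IsSplittingField K E]
    (p j : ℕ) [ExpChar K p] (hf : f ≠ 0) :
    Nat.card (E ≃ₐ[K] E) ∣ Nat.card (f.map (iterateFrobenius K p j)).Gal := by
  have : ExpChar E p := expChar_of_injective_algebraMap (algebraMap K E).injective p
  set φ := iterateFrobenius K p j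
  have hcomp : (algebraMap K E).comp φ = (iterateFrobenius E p j).comp (algebraMap K E) :=
    RingHom.ext fun x ↦ (algebraMap K E).map_iterateFrobenius p x j
  have hsplits : Fact ((f.map φ).map (algebraMap K E)).Splits := ⟨by
    rw [Polynomial.map_map, hcomp, ← Polynomial.map_map]
    exact (IsSplittingField.splits E f).map _⟩
  refine Subgroup.card_dvd_of_injective (Gal.restrict (f.map φ) E)
    ((injective_iff_map_eq_one _).2 fun σ hσ ↦ eq_one_of_forall_mem_rootSet f fun x hx ↦ ?_)
  have hroot : iterateFrobenius E p j x ∈ (f.map φ).rootSet E := by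
    rw [mem_rootSet_of_ne (map_ne_zero hf), aeval_def, eval₂_map, hcomp, ← hom_eval₂, ← aeval_def,
      aeval_eq_zero_of_mem_rootSet hx, map_zero]
  apply iterateFrobenius_inj E p j
  rw [← restrict_eq_one_iff.1 hσ _ hroot]
  exact ((σ : E →+* E).map_iterateFrobenius p x j).symm

end SplittingField

section GaloisRepresentation

open Module Matrix
open scoped MatrixGroups

variable {F K E : Type*} [Field F] [Fintype F] [Field K] [Field E] [Algebra K E]
  [Algebra F E]

local notation "q" => Fintype.card F

variable {b : K}

variable (F) in
lemma map_mem_rootSpace (σ : E ≃ₐ[K] E) {v : E}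
    (hv : v ∈ rootSpace F (algebraMap K E b)) : σ v ∈ rootSpace F (algebraMap K E b) := by
  rw [mem_rootSpace] at hv ⊢
  simpa only [map_add, map_sub, map_mul, map_pow, AlgEquiv.commutes, map_zero] using congrArg σ hv

lemma forall_mem_rootSpace_exists_smul_iff {σ : E ≃ₐ[K] E} :
    (∀ v ∈ rootSpace F (algebraMap K E b), ∃ c : F, σ v = c • v) ↔
      ∀ v ∈ (rootPolynomial F b).rootSet E, σ (v ^ (q - 1)) = v ^ (q - 1) := by
  simp only [map_pow]
  refine ⟨fun h v hv ↦ ?_, fun h v hv ↦ ?_⟩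
  · have hv₀ := ne_zero_of_mem_rootSet_rootPolynomial hv
    exact (pow_card_sub_one_eq_iff hv₀ ((map_ne_zero σ).2 hv₀)).2
      (h v (mem_rootSpace_iff_eq_zero_or_mem_rootSet.2 (.inr hv)))
  · obtain rfl | hv := mem_rootSpace_iff_eq_zero_or_mem_rootSet.1 hv
    · exact ⟨0, by rw [map_zero, smul_zero]⟩
    have hv₀ := ne_zero_of_mem_rootSet_rootPolynomial hv
    exact (pow_card_sub_one_eq_iff hv₀ ((map_ne_zero σ).2 hv₀)).1 (h v hv)

lemma exists_isRoot_of_forall_exists_smul [FiniteDimensional K E] [IsGalois K E] {v : E}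
    (hv₀ : v ≠ 0) (hv : v ∈ rootSpace F (algebraMap K E b))
    (h : ∀ σ : E ≃ₐ[K] E, ∃ c : F, σ v = c • v) : ∃ y : K, (abhyankarTrinomial q b).IsRoot y := by
  have hfix (σ : E ≃ₐ[K] E) : σ (v ^ (q - 1)) = v ^ (q - 1) := by
    rw [map_pow]
    exact (pow_card_sub_one_eq_iff hv₀ ((map_ne_zero σ).2 hv₀)).2 (h σ)
  obtain ⟨y, hy⟩ := (IsGalois.mem_range_algebraMap_iff_fixed _).2 hfix
  have hroot := (mem_rootSpace_iff_eq_zero_or_mem_rootSet.1 hv).resolve_left hv₀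
  have haeval := aeval_eq_zero_of_mem_rootSet hroot
  rw [aeval_comp, map_pow, aeval_X, ← hy, aeval_algebraMap_apply, map_eq_zero] at haeval
  exact ⟨y, haeval⟩

variable [Algebra F K] [IsScalarTower F K E]

variable (F E b) in
/-- The representation of the Galois group on the space of roots of `X ^ q² - b * X ^ q + X`. -/
noncomputable def rootSpaceRep :
    Representation F (E ≃ₐ[K] E) (rootSpace F (algebraMap K E b)) where
  toFun σ := (σ.restrictScalars F).toLinearMap.restrict fun _ ↦ map_mem_rootSpace F σ
  map_one' := rfl
  map_mul' _ _ := rfl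

variable (B : Basis (Fin 2) F (rootSpace F (algebraMap K E b)))

include B in
lemma det_rootSpaceRep (σ : E ≃ₐ[K] E) : LinearMap.det (rootSpaceRep F E b σ) = 1 := by
  obtain ⟨c, hc⟩ := exists_algebraMap_eq_of_pow_card_eq (mooreForm_pow_card (B 0).2 (B 1).2)
  have hne : mooreForm F E (B 0) (B 1) ≠ 0 := mooreForm_ne_zero <| by
    have h := B.linearIndependent.map' (Submodule.subtype _) (Submodule.ker_subtype _)
    rwa [← FinVec.etaExpand_eq (_ ∘ B)] at h
  set M := LinearMap.toMatrix B B (rootSpaceRep F E b σ) with hM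
  have hσ (j : Fin 2) : σ (B j) = M 0 j • (B 0 : E) + M 1 j • (B 1 : E) := by
    have hsum := B.sum_repr (rootSpaceRep F E b σ (B j))
    rw [Fin.sum_univ_two] at hsum
    rw [hM, LinearMap.toMatrix_apply, LinearMap.toMatrix_apply]
    exact (congrArg Subtype.val hsum).symm
  have hfix : mooreForm F E (σ (B 0)) (σ (B 1)) = mooreForm F E (B 0) (B 1) := by
    rw [← hc, ← (σ.restrictScalars F).commutes c, hc, mooreForm_apply, mooreForm_apply]
    simp
  rw [hσ, hσ, mooreForm_smul_add_smul, ← det_fin_two, hM, LinearMap.det_toMatrix] at hfix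
  exact smul_left_injective F hne (hfix.trans (one_smul F _).symm)

/-- The matrix form of `rootSpaceRep` in a basis. -/
noncomputable def rootSpaceMatrixRep : (E ≃ₐ[K] E) →* SL(2, F) where
  toFun σ := ⟨LinearMap.toMatrixAlgEquiv B (rootSpaceRep F E b σ),
    (LinearMap.det_toMatrix B _).trans (det_rootSpaceRep B σ)⟩
  map_one' := Subtype.ext <| (congrArg _ (map_one _)).trans (map_one (LinearMap.toMatrixAlgEquiv B))
  map_mul' σ τ := Subtype.ext <|
    (congrArg _ (map_mul _ σ τ)).trans (map_mul (LinearMap.toMatrixAlgEquiv B) _ _)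

lemma rootSpaceMatrixRep_smul_equivFun (σ : E ≃ₐ[K] E) (v : rootSpace F (algebraMap K E b)) :
    rootSpaceMatrixRep B σ • B.equivFun v = B.equivFun (rootSpaceRep F E b σ v) :=
  LinearMap.toMatrix_mulVec_repr B B _ v

lemma rootSpaceMatrixRep_mem_center_iff (σ : E ≃ₐ[K] E) :
    rootSpaceMatrixRep B σ ∈ Subgroup.center SL(2, F) ↔
      ∀ v ∈ rootSpace F (algebraMap K E b), ∃ c : F, σ v = c • v := by
  rw [Matrix.SpecialLinearGroup.mem_center_iff]
  constructor
  · rintro ⟨c, -, hc⟩ v hv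
    have hcv : rootSpaceRep F E b σ ⟨v, hv⟩ = c • ⟨v, hv⟩ := by
      apply B.equivFun.injective
      rw [← rootSpaceMatrixRep_smul_equivFun, map_smul, Matrix.SpecialLinearGroup.smul_def, ← hc]
      simp
    exact ⟨c, congrArg Subtype.val hcv⟩
  · intro h
    obtain ⟨c, hc⟩ : ∃ c : F, rootSpaceRep F E b σ = c • 1 := by
      refine LinearMap.exists_eq_smul_id_of_forall_notLinearIndependent fun v hv ↦ ?_
      obtain ⟨c, hc⟩ := h v v.2
      exact (LinearIndependent.pair_iff' (hv.ne_zero 0)).1 hv c (Subtype.ext hc.symm)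
    refine ⟨c, ?_, ?_⟩
    · rw [← det_rootSpaceRep B σ, hc, LinearMap.det_smul, finrank_eq_card_basis B, map_one, mul_one]
    · change _ = LinearMap.toMatrixAlgEquiv B (rootSpaceRep F E b σ)
      rw [hc, map_smul, map_one, scalar_apply, smul_one_eq_diagonal]

lemma rootSpaceMatrixRep_injective [(rootPolynomial F b).IsSplittingField K E] :
    Function.Injective (rootSpaceMatrixRep B : (E ≃ₐ[K] E) →* SL(2, F)) := by
  refine (injective_iff_map_eq_one _).2 fun σ hσ ↦
    eq_one_of_forall_mem_rootSet (rootPolynomial F b) fun v hv ↦ ?_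
  have h := rootSpaceMatrixRep_smul_equivFun B σ
    ⟨v, mem_rootSpace_iff_eq_zero_or_mem_rootSet.2 (.inr hv)⟩
  rw [hσ, one_smul] at h
  exact congrArg Subtype.val (B.equivFun.injective h).symm

lemma rootSpaceMatrixRep_surjective [(rootPolynomial F b).IsSplittingField K E]
    (hcard : Nat.card F ∣ Nat.card (E ≃ₐ[K] E))
    (hroot : ∀ y : K, ¬ (abhyankarTrinomial q b).IsRoot y) :
    Function.Surjective (rootSpaceMatrixRep B : (E ≃ₐ[K] E) →* SL(2, F)) := by
  have : FiniteDimensional K E := IsSplittingField.finiteDimensional E (rootPolynomial F b)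
  have : IsGalois K E :=
    .of_separable_splitting_field (separable_rootPolynomial F b)
  rw [← MonoidHom.range_eq_top]
  refine eq_top_of_card_dvd_of_forall_smul_ne ?_ fun v hv₀ ↦ ?_
  · rwa [← Nat.card_congr (MonoidHom.ofInjective (rootSpaceMatrixRep_injective B)).toEquiv]
  · by_contra! h
    obtain ⟨w, rfl⟩ := B.equivFun.surjective v
    have hw₀ : (w : E) ≠ 0 := by simpa using hv₀
    obtain ⟨y, hy⟩ := exists_isRoot_of_forall_exists_smul hw₀ w.2 fun σ ↦ by
      obtain ⟨c, hc⟩ := h _ ⟨σ, rfl⟩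
      rw [rootSpaceMatrixRep_smul_equivFun, ← map_smul] at hc
      exact ⟨c, congrArg Subtype.val (B.equivFun.injective hc)⟩
    exact hroot y hy

end GaloisRepresentation

section ProjectiveGaloisGroup

open Module
open scoped MatrixGroups

variable {F K : Type*} [Field F] [Fintype F] [Field K] [Algebra F K] {b : K}

local notation "q" => Fintype.card F
local notation "E" => SplittingField (rootPolynomial F b)

lemma restrictComp_eq_one_iff_rootSpaceMatrixRep_mem_center
    (B : Basis (Fin 2) F (rootSpace F (algebraMap K E b))) (σ : E ≃ₐ[K] E) :
    Gal.restrictComp (abhyankarTrinomial q b) (X ^ (q - 1))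
        (natDegree_X_pow_card_sub_one_ne_zero F K) σ = 1 ↔
      rootSpaceMatrixRep B σ ∈ Subgroup.center SL(2, F) := by
  rw [rootSpaceMatrixRep_mem_center_iff, forall_mem_rootSpace_exists_smul_iff]
  refine (restrictComp_eq_one_iff _ (monic_rootPolynomial F b).ne_zero).trans ?_
  simp only [map_pow (aeval _), aeval_X]
  rfl

theorem nonempty_gal_abhyankarTrinomial_mulEquiv
    (hcard : Nat.card F ∣ Nat.card (rootPolynomial F b).Gal)
    (hroot : ∀ y : K, ¬ (abhyankarTrinomial q b).IsRoot y) :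
    Nonempty ((abhyankarTrinomial q b).Gal ≃* SL(2, F) ⧸ Subgroup.center SL(2, F)) := by
  let B := finBasisOfFinrankEq F _ (finrank_rootSpace (b := b) (SplittingField.splits _))
  let ρ : (rootPolynomial F b).Gal →* SL(2, F) := rootSpaceMatrixRep B
  let π := Gal.restrictComp (abhyankarTrinomial q b) (X ^ (q - 1))
    (natDegree_X_pow_card_sub_one_ne_zero F K)
  have hρ : Function.Bijective ρ :=
    ⟨rootSpaceMatrixRep_injective B, rootSpaceMatrixRep_surjective B hcard hroot⟩
  have hπ : Function.Surjective π := Gal.restrictComp_surjective _ _ _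
  have hker : π.ker = (Subgroup.center SL(2, F)).comap ρ :=
    Subgroup.ext (restrictComp_eq_one_iff_rootSpaceMatrixRep_mem_center B)
  have hmap : π.ker.map (MulEquiv.ofBijective ρ hρ) = Subgroup.center SL(2, F) := by
    rw [hker]
    exact Subgroup.map_comap_eq_self_of_surjective hρ.surjective _
  exact ⟨(QuotientGroup.quotientKerEquivOfSurjective π hπ).symm.trans
    (QuotientGroup.congr _ _ _ hmap)⟩

end ProjectiveGaloisGroup

section Ramification

open IsDedekindDomain

theorem exists_valuation_algebraMap_eq_pow {A K : Type*} (E : Type*) [CommRing A]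
    [IsDedekindDomain A] [Field K] [Algebra A K] [IsFractionRing A K] [Field E] [Algebra K E]
    [FiniteDimensional K E] [IsGalois K E] (v : HeightOneSpectrum A) :
    ∃ (w : Valuation E (WithZero (Multiplicative ℤ))) (n : ℕ), n ∣ Nat.card (E ≃ₐ[K] E) ∧
      ∀ x : K, w (algebraMap K E x) = v.valuation K x ^ n := by
  let : Algebra A E := ((algebraMap K E).comp (algebraMap A K)).toAlgebra
  have : IsScalarTower A K E := .of_algebraMap_eq fun _ ↦ rfl
  let B := integralClosure A E
  have : IsDedekindDomain B := integralClosure.isDedekindDomain A K E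
  have : IsFractionRing B E := integralClosure.isFractionRing_of_finite_extension K E
  have : Module.Finite A B := IsIntegralClosure.finite A K E B
  have : FaithfulSMul A E := (faithfulSMul_iff_algebraMap_injective A E).2 <|
    (algebraMap K E).injective.comp (IsFractionRing.injective A K)
  have : SMulCommClass (E ≃ₐ[K] E) A E := ⟨fun σ a x ↦ by
    simp [Algebra.smul_def, IsScalarTower.algebraMap_apply A K E]⟩
  have : IsGaloisGroup (E ≃ₐ[K] E) A B := .of_isFractionRing _ A B K E
  have := v.isPrime
  obtain ⟨Q, hQ, _⟩ := v.asIdeal.nonempty_primesOver (S := B)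
  let w : HeightOneSpectrum B := ⟨Q, hQ, Ideal.ne_bot_of_liesOver_of_ne_bot v.ne_bot Q⟩
  have : w.asIdeal.LiesOver v.asIdeal := ‹_›
  refine ⟨w.valuation E, v.asIdeal.ramificationIdx' w.asIdeal, ?_,
    fun x ↦ (HeightOneSpectrum.valuation_liesOver E v w x).symm⟩
  rw [Ideal.ramificationIdx'_eq_ramificationIdx _ _ v.ne_bot,
    ← Ideal.ramificationIdxIn_eq_ramificationIdx v.asIdeal w.asIdeal (E ≃ₐ[K] E),
    ← Ideal.ncard_primesOver_mul_ramificationIdxIn_mul_inertiaDegIn v.asIdeal B (E ≃ₐ[K] E)]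
  exact (dvd_mul_right _ _).mul_left _

lemma dvd_of_one_le_valuation {E : Type*} [Field E]
    {w : Valuation E (WithZero (Multiplicative ℤ))} {q N : ℕ} (hq : q ≠ 0) (hN : 0 < N) {c z : E}
    (hc : w c = WithZero.exp (N : ℤ)) (hz : z ^ q ^ 2 - c * z ^ q + z = 0) (hwz : 1 ≤ w z) :
    q ∣ N := by
  have hw₀ : 0 < w z := zero_lt_one.trans_le hwz
  have hlt : w z < w (c * z ^ q) := by
    rw [map_mul, map_pow]
    calc w z ≤ w z ^ q := le_self_pow hwz hq
      _ < w c * w z ^ q := lt_mul_of_one_lt_left (pow_pos hw₀ q) <| by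
        rwa [hc, ← WithZero.exp_zero, WithZero.exp_lt_exp, Nat.cast_pos]
  have hval : w z ^ q ^ 2 = w c * w z ^ q := by
    have hz' : z ^ q ^ 2 = c * z ^ q - z := by linear_combination hz
    rw [← map_pow, hz', Valuation.map_sub_eq_of_lt_left _ hlt, map_mul, map_pow]
  obtain ⟨m, hm⟩ : ∃ m : ℤ, w z = WithZero.exp m := ⟨_, (WithZero.exp_log hw₀.ne').symm⟩
  rw [hm, hc, ← WithZero.exp_nsmul, ← WithZero.exp_nsmul, ← WithZero.exp_add, WithZero.exp_inj,
    nsmul_eq_mul, nsmul_eq_mul, Nat.cast_pow] at hval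
  rw [← Int.natCast_dvd_natCast]
  exact ⟨q * m - m, by linear_combination -hval⟩

lemma exists_mem_roots_one_le_valuation {E Γ : Type*} [Field E]
    [LinearOrderedCommGroupWithZero Γ] (w : Valuation E Γ) {f : E[X]} (hf : f.Splits)
    (hmonic : f.Monic) (hdeg : f.natDegree ≠ 0) (hcoeff : 1 ≤ w (f.coeff 0)) :
    ∃ z ∈ f.roots, 1 ≤ w z := by
  by_contra! h
  have hne : f.roots ≠ 0 := by
    rwa [Ne, ← Multiset.card_eq_zero, ← hf.natDegree_eq_card_roots]
  have hlt : w f.roots.prod < 1 :=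
    Multiset.prod_induction_nonempty (w · < 1)
      (fun x y hx hy ↦ (map_mul w x y).trans_lt (mul_lt_one_of_lt_of_le hx hy.le)) hne h
  rw [hf.coeff_zero_eq_prod_roots_of_monic hmonic, map_mul, map_pow, Valuation.map_neg, map_one,
    one_pow, one_mul] at hcoeff
  exact hcoeff.not_gt hlt

variable {F K E : Type*} [Field F] [Fintype F] [Field K] {b : K} [Field E] [Algebra K E]

local notation "q" => Fintype.card F

lemma exists_mem_rootSet_one_le_valuation [(rootPolynomial F b).IsSplittingField K E]
    {Γ : Type*} [LinearOrderedCommGroupWithZero Γ] (w : Valuation E Γ) :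
    ∃ z ∈ (rootPolynomial F b).rootSet E, 1 ≤ w z := by
  have hmonic := monic_rootPolynomial F b
  obtain ⟨z, hz, hwz⟩ := exists_mem_roots_one_le_valuation w
    (IsSplittingField.splits E (rootPolynomial F b)) (hmonic.map _)
    (by rw [hmonic.natDegree_map]; exact natDegree_rootPolynomial_ne_zero F b)
    (by rw [coeff_map, coeff_zero_rootPolynomial, map_one, map_one])
  rw [mem_roots_map hmonic.ne_zero] at hz
  exact ⟨z, (mem_rootSet_of_ne hmonic.ne_zero).2 hz, hwz⟩

theorem card_dvd_natCard_algEquiv_of_valuation_eq_exp [Algebra F K]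
    [(rootPolynomial F b).IsSplittingField K E] {A : Type*} [CommRing A] [IsDedekindDomain A]
    [Algebra A K] [IsFractionRing A K] (v : HeightOneSpectrum A) {N : ℕ} (hN : 0 < N)
    (hqN : Nat.Coprime q N) (hb : v.valuation K b = WithZero.exp (N : ℤ)) :
    q ∣ Nat.card (E ≃ₐ[K] E) := by
  have : FiniteDimensional K E := IsSplittingField.finiteDimensional E (rootPolynomial F b)
  have : IsGalois K E := .of_separable_splitting_field (separable_rootPolynomial F b)
  obtain ⟨w, n, hn, hw⟩ := exists_valuation_algebraMap_eq_pow E (K := K) v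
  obtain ⟨z, hz, hwz⟩ := exists_mem_rootSet_one_le_valuation (F := F) (b := b) w
  have hn₀ : 0 < n := Nat.pos_of_dvd_of_pos hn Nat.card_pos
  have hwb : w (algebraMap K E b) = WithZero.exp ((n * N : ℕ) : ℤ) := by
    rw [hw, hb, ← WithZero.exp_nsmul, nsmul_eq_mul, Nat.cast_mul]
  have hqn : q ∣ n * N := dvd_of_one_le_valuation Fintype.card_ne_zero (Nat.mul_pos hn₀ hN) hwb
    ((pow_card_sq_sub_add_eq_zero_iff F b).2 (.inr hz)) hwz
  exact (hqN.dvd_of_dvd_mul_right hqn).trans hn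

end Ramification

section RationalFunctions

lemma isCoprime_pow_succ_add_pow_succ {R : Type*} [CommRing R] {x y : R} (h : IsCoprime x y)
    (n i j : ℕ) : IsCoprime (x ^ (n + 1) + y ^ (n + 1)) (x ^ i * y ^ j) := by
  refine .mul_right (.pow_right ?_) (.pow_right ?_)
  · rw [pow_succ' x, add_comm]
    exact h.symm.pow_left.add_mul_left_left _
  · rw [pow_succ' y]
    exact h.pow_left.add_mul_left_left _

variable {k : Type*} [Field k]

lemma X_dvd_of_dvd_X_pow {P : k[X]} {s : ℕ} (hP : P ∣ X ^ s) (hdeg : P.natDegree ≠ 0) : X ∣ P :=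
  (dvd_or_isCoprime X P irreducible_X).resolve_right fun hcop ↦
    hdeg (natDegree_eq_zero_of_isUnit (hcop.symm.pow_right.isUnit_of_dvd' dvd_rfl hP))

lemma natDegree_eq_of_natDegree_pow_add_pow_eq_zero {P Q : k[X]} {n : ℕ} (hn : n ≠ 0)
    (h : (P ^ n + Q ^ n).natDegree = 0) : P.natDegree = Q.natDegree := by
  by_contra! hne
  wlog hlt : P.natDegree < Q.natDegree generalizing P Q
  · exact this (by rwa [add_comm]) hne.symm (hne.symm.lt_of_le (not_lt.1 hlt))
  rw [natDegree_add_eq_right_of_natDegree_lt, natDegree_pow] at h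
  · exact (mul_pos hn.bot_lt (Nat.zero_lt_of_lt hlt)).ne' h
  · rw [natDegree_pow, natDegree_pow]
    gcongr

variable {a : k} {s q : ℕ} (ha : a ≠ 0) (hs : 0 < s) (hq : 0 < q)
include ha hs hq

lemma X_pow_mul_pow_add_pow_ne {P Q : k[X]} (hPQ : IsCoprime P Q) :
    X ^ s * (P ^ (q + 1) + Q ^ (q + 1)) ≠ C a * (P * Q ^ q) := by
  intro h
  set R := P ^ (q + 1) + Q ^ (q + 1)
  have hCa : IsUnit (C a) := isUnit_C.2 ha.isUnit
  have hR : IsCoprime R (P * Q ^ q) := by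
    simpa only [pow_one] using isCoprime_pow_succ_add_pow_succ hPQ q 1 q
  have hRunit : IsUnit R :=
    isUnit_of_dvd_unit (hR.dvd_of_dvd_mul_right ⟨X ^ s, by rw [← h, mul_comm]⟩) hCa
  have hdeg : P.natDegree = Q.natDegree := natDegree_eq_of_natDegree_pow_add_pow_eq_zero
    q.succ_ne_zero (natDegree_eq_zero_of_isUnit hRunit)
  have hassoc : Associated (X ^ s) (P * Q ^ q) :=
    (associated_mul_unit_right _ _ hRunit).trans (h ▸ associated_unit_mul_left _ _ hCa)
  have hdvd : P * Q ^ q ∣ X ^ s := hassoc.dvd'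
  have hPdeg : P.natDegree ≠ 0 := by
    intro h₀
    refine hs.ne' (Nat.le_zero.1 ?_)
    calc s = (P * Q ^ q).natDegree := by
          rw [← natDegree_eq_of_degree_eq (degree_eq_degree_of_associated hassoc), natDegree_X_pow]
      _ ≤ P.natDegree + q * Q.natDegree :=
          natDegree_mul_le.trans (Nat.add_le_add_left natDegree_pow_le _)
      _ = 0 := by rw [← hdeg, h₀, mul_zero, add_zero]
  exact not_isUnit_X (hPQ.isUnit_of_dvd' (X_dvd_of_dvd_X_pow (dvd_of_mul_right_dvd hdvd) hPdeg)
    (X_dvd_of_dvd_X_pow ((dvd_pow_self Q hq.ne').trans (dvd_of_mul_left_dvd hdvd)) (hdeg ▸ hPdeg)))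

theorem not_isRoot_abhyankarTrinomial (y : RatFunc k) :
    ¬ (abhyankarTrinomial q (algebraMap k (RatFunc k) a * (RatFunc.X ^ s)⁻¹)).IsRoot y := by
  intro hy
  have hX : (RatFunc.X : RatFunc k) ^ s ≠ 0 := pow_ne_zero _ RatFunc.X_ne_zero
  have hdenom : algebraMap k[X] (RatFunc k) y.denom ≠ 0 :=
    RatFunc.algebraMap_ne_zero y.denom_ne_zero
  have hnum : algebraMap k[X] (RatFunc k) y.num = y * algebraMap k[X] (RatFunc k) y.denom := by
    rw [← div_eq_iff hdenom, RatFunc.num_div_denom]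
  refine X_pow_mul_pow_add_pow_ne ha hs hq y.isCoprime_num_denom
    (RatFunc.algebraMap_injective k ?_)
  have hy' : RatFunc.X ^ s * (y ^ (q + 1) + 1) = algebraMap k (RatFunc k) a * y := by
    rw [IsRoot, abhyankarTrinomial, eval_add, eval_sub, eval_pow, eval_mul, eval_C, eval_X,
      eval_one] at hy
    linear_combination RatFunc.X ^ s * hy + algebraMap k (RatFunc k) a * y * inv_mul_cancel₀ hX
  simp only [map_add, map_mul, map_pow, RatFunc.algebraMap_X, RatFunc.algebraMap_C,
    ← RatFunc.algebraMap_eq_C, hnum]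
  linear_combination algebraMap k[X] (RatFunc k) y.denom ^ (q + 1) * hy'

end RationalFunctions

section Divisibility

variable {F k : Type*} [Field F] [Fintype F] [Field k] {a : k} {s : ℕ}

local notation "q" => Fintype.card F

lemma valuation_idealX_coeff (ha : a ≠ 0) :
    (idealX k).valuation (RatFunc k) (algebraMap k (RatFunc k) a * (RatFunc.X ^ s)⁻¹) =
      WithZero.exp (s : ℤ) := by
  have hC : (idealX k).valuation (RatFunc k) (algebraMap k (RatFunc k) a) = 1 := by
    rw [IsScalarTower.algebraMap_apply k k[X] (RatFunc k),
      IsDedekindDomain.HeightOneSpectrum.valuation_eq_one_iff_notMem, idealX_span,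
      Ideal.mem_span_singleton, X_dvd_iff]
    simpa using ha
  rw [map_mul, hC, one_mul, map_inv₀, map_pow, valuation_X_eq_neg_one, ← WithZero.exp_nsmul,
    ← WithZero.exp_neg, smul_neg, neg_neg, nsmul_one]

variable (a s) in
lemma mapRingHom_algebraMap_mul_inv_X_pow {l : Type*} [Field l] (φ : k →+* l)
    (hφ : nonZeroDivisors k[X] ≤ (nonZeroDivisors l[X]).comap (mapRingHom φ)) :
    RatFunc.mapRingHom (mapRingHom φ) hφ (algebraMap k (RatFunc k) a * (RatFunc.X ^ s)⁻¹) =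
      algebraMap l (RatFunc l) (φ a) * (RatFunc.X ^ s)⁻¹ := by
  have h (P : k[X]) : RatFunc.mapRingHom (mapRingHom φ) hφ (algebraMap k[X] (RatFunc k) P) =
      algebraMap l[X] (RatFunc l) (P.map φ) := by
    simpa [RatFunc.coe_mapRingHom_eq_coe_map] using
      RatFunc.map_apply_div (mapRingHom φ) hφ P 1
  simp only [map_mul, map_inv₀, map_pow, ← RatFunc.algebraMap_X, RatFunc.algebraMap_eq_C,
    ← RatFunc.algebraMap_C, h, map_X, map_C]

variable [Algebra F k]

lemma card_dvd_natCard_gal_of_isAlgClosed [IsAlgClosed k] (ha : a ≠ 0) (hs : 0 < s) :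
    q ∣ Nat.card
      (rootPolynomial F (algebraMap k (RatFunc k) a * (RatFunc.X ^ s)⁻¹)).Gal := by
  obtain ⟨p, _, e, hp, hq⟩ := FiniteField.card' F
  have : CharP (RatFunc k) p :=
    charP_of_injective_algebraMap (algebraMap F (RatFunc k)).injective p
  have := Fact.mk hp
  obtain ⟨j, t, hpt, rfl⟩ := Nat.exists_eq_pow_mul_and_not_dvd hs.ne' p hp.ne_one
  obtain ⟨c, rfl⟩ := IsAlgClosed.exists_pow_nat_eq a (pow_pos hp.pos j)
  set b := algebraMap k (RatFunc k) c * (RatFunc.X ^ t)⁻¹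
  have hb : algebraMap k (RatFunc k) (c ^ p ^ j) * (RatFunc.X ^ (p ^ j * t))⁻¹ =
      iterateFrobenius (RatFunc k) p j b := by
    rw [iterateFrobenius_def, mul_pow, map_pow, inv_pow, ← pow_mul, mul_comm t]
  have hqt : Nat.Coprime q t :=
    hq ▸ ((Nat.Prime.coprime_iff_not_dvd hp).2 hpt).pow_left e
  rw [hb, ← rootPolynomial_map]
  let E := (rootPolynomial F b).SplittingField
  have hc : c ≠ 0 := ne_zero_pow (pow_pos hp.pos j).ne' ha
  exact (card_dvd_natCard_algEquiv_of_valuation_eq_exp (E := E) (idealX k)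
      (Nat.pos_of_mul_pos_left hs) hqt (valuation_idealX_coeff hc)).trans
    (natCard_algEquiv_dvd_natCard_gal_map_iterateFrobenius (E := E) p j
      (monic_rootPolynomial F b).ne_zero)

theorem card_dvd_natCard_gal_rootPolynomial (ha : a ≠ 0) (hs : 0 < s) :
    q ∣ Nat.card
      (rootPolynomial F (algebraMap k (RatFunc k) a * (RatFunc.X ^ s)⁻¹)).Gal := by
  let φ := algebraMap k (AlgebraicClosure k)
  let : Algebra (RatFunc k) (RatFunc (AlgebraicClosure k)) :=
    (RatFunc.mapRingHom (mapRingHom φ) (nonZeroDivisors_le_comap_nonZeroDivisors_of_injective _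
      (map_injective φ φ.injective))).toAlgebra
  have hb : algebraMap (RatFunc k) (RatFunc (AlgebraicClosure k))
      (algebraMap k (RatFunc k) a * (RatFunc.X ^ s)⁻¹) =
        algebraMap _ (RatFunc (AlgebraicClosure k)) (φ a) * (RatFunc.X ^ s)⁻¹ := by
    rw [RingHom.algebraMap_toAlgebra, mapRingHom_algebraMap_mul_inv_X_pow]
  refine (card_dvd_natCard_gal_of_isAlgClosed ((map_ne_zero φ).2 ha) hs).trans ?_
  rw [← hb, ← rootPolynomial_map]
  exact natCard_algEquiv_dvd_natCard_gal (monic_rootPolynomial F _).ne_zero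

end Divisibility

theorem stmt_1_general {F k : Type*} [Field F] [Fintype F] [Field k] [Algebra F k] {a : k}
    (ha : a ≠ 0) {s : ℕ} (hs : 0 < s) :
    Nonempty ((abhyankarTrinomial (Fintype.card F)
        (algebraMap k (RatFunc k) a * (RatFunc.X ^ s)⁻¹)).Gal ≃*
      Matrix.SpecialLinearGroup (Fin 2) F ⧸
        Subgroup.center (Matrix.SpecialLinearGroup (Fin 2) F)) :=
  nonempty_gal_abhyankarTrinomial_mulEquiv
    (Nat.card_eq_fintype_card (α := F) ▸ card_dvd_natCard_gal_rootPolynomial ha hs)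
    (not_isRoot_abhyankarTrinomial ha hs Fintype.card_pos)

/-- Abhyankar: for `n = q + 1` with `q = p^e`, the Galois group of
`Y^n - a·X^{-s}·Y + 1` over `k(X)` (`k` algebraically closed of characteristic
`p`, `a ∈ k` nonzero, `s ≥ 1`) is isomorphic to `PSL(2, q)`. -/
theorem stmt_1 (p : ℕ) [Fact p.Prime] (e : ℕ) (he : 0 < e)
    (k : Type*) [Field k] [IsAlgClosed k] [CharP k p]
    (q n : ℕ) (hq : q = p ^ e) (hn : n = q + 1)
    (a : k) (ha : a ≠ 0) (s : ℕ) (hs : 0 < s)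
    (f : Polynomial (RatFunc k))
    (hf : f = X ^ n - C (algebraMap k (RatFunc k) a * (RatFunc.X ^ s)⁻¹) * X + 1) :
    Nonempty (f.Gal ≃*
      Matrix.SpecialLinearGroup (Fin 2) (GaloisField p e) ⧸
        Subgroup.center (Matrix.SpecialLinearGroup (Fin 2) (GaloisField p e))) := by
  let : Algebra (ZMod p) k := ZMod.algebra k p
  let : Algebra (GaloisField p e) k :=
    (IsAlgClosed.lift : GaloisField p e →ₐ[ZMod p] k).toRingHom.toAlgebra
  let := Fintype.ofFinite (GaloisField p e)
  obtain rfl : q = Fintype.card (GaloisField p e) := by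
    rw [hq, ← Nat.card_eq_fintype_card, GaloisField.card p e he.ne']
  subst hn hf
  exact stmt_1_general ha hs
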